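/- Let K ⊆ K' be an extension of fields of characteristic 0, I ≤ K[x₁,…,xₙ] an ideal, A = K[x₁,…,xₙ]/I, A' = K'[x₁,…,xₙ]/(I·K'[x₁,…,xₙ]), and let p ≤ A be a prime ideal. Then the localization A_p is a regular local ring if and only if the localization A'_P is a regular local ring for one (equivalently, for every) prime ideal P of A' that is minimal over the extension p·A'. -/

import Mathlib

/-- A commutative ring `R` is a *regular local ring* if it is Noetherian and local and
its maximal ideal can be generated by `dim R` many elements (by Krull's height theorem
this number of generators is then minimal, i.e. `dim_κ m/m² = dim R`). -/
def IsRegularLocal (R : Type*) [CommRing R] : Prop :=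
  IsNoetherianRing R ∧ ∃ (h : IsLocalRing R) (s : Finset R),
    Ideal.span (s : Set R) = @IsLocalRing.maximalIdeal R _ h ∧
    (s.card : WithBot (WithTop ℕ)) = ringKrullDim R

/-!
Let `A → B` be a base change of a reduced algebra `R` over a perfect field `k`, such as `K → K'`.
It is flat, so going-down shows that a prime `P` minimal over `pB` lies over `p`. As `k` is
perfect, `B/pB = R ⊗ A/p` is again reduced, so `pB` is radical and the maximal ideal of `B_P` is
the extension of that of `A_p`. Going-down for the flat local homomorphism `A_p → B_P` then gives
equality of dimensions, and flatness gives equality of the numbers of generators of the two maximal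
ideals; regularity compares these two invariants.

That `R ⊗ D` is reduced for reduced `D` is checked on residue fields of finitely generated
subalgebras of `R`; such a field is finitely generated over `k`, hence separable over a purely
transcendental extension, whose tensor product with `D` is a localization of a polynomial ring
over `D`.
-/

open TensorProduct IsLocalRing

theorem isReduced_tensorProduct_of_forall_residueField {k R D : Type*} [CommRing k] [CommRing R]
    [IsReduced R] [Algebra k R] [CommRing D] [Algebra k D] [Module.Free k D]
    (h : ∀ (p : Ideal R) [p.IsPrime], IsReduced (p.ResidueField ⊗[k] D)) :
    IsReduced (R ⊗[k] D) := by
  refine ⟨fun x hx => ?_⟩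
  let b := Module.Free.chooseBasis k D
  refine (b.baseChange R).ext_elem fun i => ?_
  suffices hi : (b.baseChange R).repr x i ∈ nilradical R by
    simpa only [nilradical_eq_zero, Ideal.zero_eq_bot, Ideal.mem_bot, map_zero,
      Finsupp.zero_apply] using hi
  refine nilpotent_iff_mem_prime.mpr fun p _ => ?_
  let f := Algebra.TensorProduct.map (IsScalarTower.toAlgHom k R p.ResidueField) (AlgHom.id k D)
  have hf : ∀ y, (b.baseChange p.ResidueField).repr (f y) i =
      algebraMap R p.ResidueField ((b.baseChange R).repr y i) := fun y => by
    induction y with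
    | zero => simp
    | tmul r d => simp [f, Algebra.smul_def, ← IsScalarTower.algebraMap_apply]
    | add y z hy hz => simp only [map_add, Finsupp.add_apply, hy, hz]
  rw [← Ideal.algebraMap_residueField_eq_zero, ← hf, (hx.map f).eq_zero, map_zero,
    Finsupp.zero_apply]

theorem isReduced_tensorProduct_of_isSeparable {F N E : Type*} [Field F] [CommRing N] [IsReduced N]
    [Algebra F N] [Field E] [Algebra F E] [Algebra.IsSeparable F E] : IsReduced (N ⊗[F] E) := by
  refine isReduced_tensorProduct_of_forall_residueField fun p _ =>
    IsReduced.tensorProduct_of_flat_of_forall_fg fun B hB => ?_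
  have : Algebra.FiniteType F B := B.fg_iff_finiteType.mp hB
  -- A subalgebra of an algebraic extension is a field.
  let B' : IntermediateField F E := B.toIntermediateField fun x hx =>
    B.inv_mem_of_algebraic (x := ⟨x, hx⟩) (Algebra.IsAlgebraic.isAlgebraic (x : E))
  have : Algebra.FormallyUnramified F B := Algebra.FormallyUnramified.of_isSeparable F B'
  exact Algebra.FormallyUnramified.isReduced_of_field p.ResidueField (p.ResidueField ⊗[F] B)

theorem isReduced_tensorProduct_of_isLocalization {k S F : Type*} [CommRing k] [CommRing S]
    [Algebra k S] (M : Submonoid S) [CommRing F] [Algebra k F] [Algebra S F] [IsScalarTower k S F]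
    [IsLocalization M F] (D : Type*) [CommRing D] [Algebra k D] [IsReduced (S ⊗[k] D)] :
    IsReduced (F ⊗[k] D) := by
  let f : S ⊗[k] D →ₐ[S] F ⊗[k] D :=
    Algebra.TensorProduct.map (Algebra.ofId S F) (AlgHom.id k D)
  let : Algebra (S ⊗[k] D) (F ⊗[k] D) := f.toRingHom.toAlgebra
  have : IsScalarTower S (S ⊗[k] D) (F ⊗[k] D) := .of_algebraMap_eq fun x => (f.commutes x).symm
  let T := Algebra.algebraMapSubmonoid (S ⊗[k] D) M
  have : IsLocalization T (F ⊗[k] D) :=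
    IsLocalization.tensorProduct_tensorProduct k D M F <| RingHom.ext fun x =>
      (Algebra.TensorProduct.map_tmul _ _ 1 x).trans (by simp)
  let e := IsLocalization.algEquiv T (F ⊗[k] D) (Localization T)
  exact isReduced_of_injective e e.injective

open scoped IntermediateField.algebraAdjoinAdjoin in
theorem isReduced_adjoin_tensorProduct {k E ι : Type*} [Field k] [Field E] [Algebra k E] {v : ι → E}
    (hv : AlgebraicIndependent k v) (D : Type*) [CommRing D] [IsReduced D] [Algebra k D] :
    IsReduced (IntermediateField.adjoin k (Set.range v) ⊗[k] D) := by
  let S := Algebra.adjoin k (Set.range v)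
  let e : S ⊗[k] D ≃ₐ[k] MvPolynomial ι D :=
    (Algebra.TensorProduct.comm k S D).trans <|
      (Algebra.TensorProduct.congr AlgEquiv.refl hv.aevalEquiv.symm).trans
        ((MvPolynomial.algebraTensorAlgEquiv k D).restrictScalars k)
  have : IsReduced (S ⊗[k] D) := isReduced_of_injective e e.injective
  exact isReduced_tensorProduct_of_isLocalization (nonZeroDivisors S) D

theorem isReduced_tensorProduct_trans {k : Type*} (F : Type*) {E D : Type*} [CommRing k] [Field F]
    [Field E] [Algebra k F] [Algebra F E] [Algebra k E] [IsScalarTower k F E]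
    [Algebra.IsSeparable F E] [CommRing D] [Algebra k D] [IsReduced (F ⊗[k] D)] :
    IsReduced (E ⊗[k] D) := by
  have : IsReduced ((F ⊗[k] D) ⊗[F] E) := isReduced_tensorProduct_of_isSeparable
  let e : (F ⊗[k] D) ⊗[F] E ≃ₐ[F] E ⊗[k] D :=
    (Algebra.TensorProduct.comm F (F ⊗[k] D) E).trans
      ((Algebra.TensorProduct.cancelBaseChange k F E E D).restrictScalars F)
  exact isReduced_of_injective e.symm e.symm.injective

theorem isReduced_tensorProduct_of_essFiniteType {k E D : Type*} [Field k] [PerfectField k]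
    [Field E] [Algebra k E] [Algebra.EssFiniteType k E] [CommRing D] [IsReduced D] [Algebra k D] :
    IsReduced (E ⊗[k] D) := by
  obtain ⟨s, hs, hsep⟩ := exists_isTranscendenceBasis_and_isSeparable_of_perfectField k E
  let F := IntermediateField.adjoin k (Set.range ((↑) : s → E))
  have : Algebra.IsSeparable F E := by
    have hF : IntermediateField.adjoin k (s : Set E) = F := by simp [F]
    exact hF ▸ hsep
  have : IsReduced (F ⊗[k] D) := isReduced_adjoin_tensorProduct hs.1 D
  exact isReduced_tensorProduct_trans F

theorem isReduced_tensorProduct {k R D : Type*} [Field k] [PerfectField k] [CommRing R]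
    [IsReduced R] [Algebra k R] [CommRing D] [IsReduced D] [Algebra k D] :
    IsReduced (R ⊗[k] D) := by
  have hR (B : Subalgebra k R) (hB : B.FG) : IsReduced (D ⊗[k] B) := by
    have : Algebra.FiniteType k B := B.fg_iff_finiteType.mp hB
    have : IsReduced B := isReduced_of_injective B.val Subtype.val_injective
    have : IsReduced (B ⊗[k] D) := isReduced_tensorProduct_of_forall_residueField fun p _ =>
      have : Algebra.EssFiniteType k p.ResidueField := .comp k B p.ResidueField
      isReduced_tensorProduct_of_essFiniteType
    let e := Algebra.TensorProduct.comm k D B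
    exact isReduced_of_injective e e.injective
  have : IsReduced (D ⊗[k] R) := IsReduced.tensorProduct_of_flat_of_forall_fg hR
  let e := Algebra.TensorProduct.comm k R D
  exact isReduced_of_injective e e.injective

theorem isRegularLocal_iff_isRegularLocalRing (R : Type*) [CommRing R] :
    IsRegularLocal R ↔ IsRegularLocalRing R := by
  constructor
  · rintro ⟨_, _, s, hs, hcard⟩
    refine .of_spanFinrank_maximalIdeal_le R ?_
    rw [← hs, ← hcard]
    have := Submodule.spanFinrank_span_le_ncard_of_finite (R := R) s.finite_toSet
    rw [Set.ncard_coe_finset] at this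
    exact Nat.cast_le.mpr this
  · intro _
    obtain ⟨s, hcard, hs⟩ := Submodule.FG.exists_span_finset_card_eq_spanFinrank
      (IsNoetherian.noetherian (maximalIdeal R))
    exact ⟨inferInstance, inferInstance, s, hs, hcard ▸ (isRegularLocalRing_iff R).mp ‹_›⟩

theorem map_rid_baseChange {R : Type*} (S : Type*) [CommRing R] [CommRing S] [Algebra R S]
    (I : Ideal R) : (Submodule.baseChange S I).map (AlgebraTensorModule.rid R S S).toLinearMap =
      I.map (algebraMap R S) := by
  rw [Submodule.baseChange_eq_span, Submodule.map_span, Ideal.map]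
  congr 1
  ext x
  simp [Algebra.algebraMap_eq_smul_one]

theorem finrank_residueField_tensorProduct {R M : Type*} [CommRing R] [IsLocalRing R]
    [AddCommGroup M] [Module R M] {N : Submodule R M} (hN : N.FG) :
    Module.finrank (ResidueField R) (ResidueField R ⊗[R] N) = N.spanFinrank := by
  rw [← TensorProduct.spanFinrank_top_eq_of_residueField N hN,
    Module.finrank_eq_spanFinrank_of_free]

section FlatLocal

variable {R S : Type*} [CommRing R] [CommRing S] [IsLocalRing R] [IsLocalRing S] [Algebra R S]
  [IsLocalHom (algebraMap R S)]

theorem spanFinrank_map_eq_of_flat [Module.Flat R S] {I : Ideal R} (hI : I.FG) :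
    (I.map (algebraMap R S)).spanFinrank = I.spanFinrank := by
  let e : I.map (algebraMap R S) ≃ₗ[S] S ⊗[R] I :=
    (LinearEquiv.ofEq _ _ (map_rid_baseChange S I).symm).trans
      (((AlgebraTensorModule.rid R S S).submoduleMap (Submodule.baseChange S I)).symm.trans
        (Submodule.toBaseChange.toLinearEquiv S I).symm)
  let eκ : ResidueField S ⊗[S] I.map (algebraMap R S) ≃ₗ[ResidueField S]
      ResidueField S ⊗[ResidueField R] (ResidueField R ⊗[R] I) :=
    (AlgebraTensorModule.congr (LinearEquiv.refl _ _) e).trans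
      ((AlgebraTensorModule.cancelBaseChange R S (ResidueField S) (ResidueField S) I).trans
        (AlgebraTensorModule.cancelBaseChange R (ResidueField R) (ResidueField S)
          (ResidueField S) I).symm)
  rw [← finrank_residueField_tensorProduct (hI.map (algebraMap R S)),
    ← finrank_residueField_tensorProduct hI, eκ.finrank_eq, Module.finrank_baseChange]

theorem ringKrullDim_eq_of_map_maximalIdeal_eq [Algebra.HasGoingDown R S] [IsNoetherianRing R]
    [IsNoetherianRing S] (h : (maximalIdeal R).map (algebraMap R S) = maximalIdeal S) :
    ringKrullDim S = ringKrullDim R := by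
  rw [← maximalIdeal_height_eq_ringKrullDim, ← maximalIdeal_height_eq_ringKrullDim,
    Ideal.height_eq_height_add_of_liesOver_of_hasGoingDown (maximalIdeal R) (maximalIdeal S), h,
    Ideal.map_quotient_self]
  simp

theorem isRegularLocalRing_iff_of_map_maximalIdeal_eq [Module.Flat R S] [IsNoetherianRing R]
    [IsNoetherianRing S] (h : (maximalIdeal R).map (algebraMap R S) = maximalIdeal S) :
    IsRegularLocalRing R ↔ IsRegularLocalRing S := by
  rw [isRegularLocalRing_iff, isRegularLocalRing_iff, ringKrullDim_eq_of_map_maximalIdeal_eq h,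
    ← h, spanFinrank_map_eq_of_flat (IsNoetherian.noetherian (maximalIdeal R))]

end FlatLocal

section MinimalPrimes

variable {A B : Type*} [CommRing A] [CommRing B] [Algebra A B] {p : Ideal A} [p.IsPrime]
  {P : Ideal B} [P.IsPrime]

theorem liesOver_of_mem_minimalPrimes_map [Algebra.HasGoingDown A B]
    (hP : P ∈ (p.map (algebraMap A B)).minimalPrimes) : P.LiesOver p := by
  have hpP : p ≤ P.under A := Ideal.map_le_iff_le_comap.mp hP.1.2
  obtain ⟨Q, hQP, hQ, hQp⟩ := Ideal.exists_ideal_le_liesOver_of_le (S := B) P hpP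
  have hpQ : p.map (algebraMap A B) ≤ Q := Ideal.map_le_iff_le_comap.mpr hQp.over.le
  rwa [← le_antisymm hQP (hP.2 ⟨hQ, hpQ⟩ hQP)]

theorem map_maximalIdeal_localization_eq [P.LiesOver p]
    [Algebra (Localization.AtPrime p) (Localization.AtPrime P)]
    [Localization.AtPrime.IsLiesOverAlgebra p P] (hrad : (p.map (algebraMap A B)).IsRadical)
    (hP : P ∈ (p.map (algebraMap A B)).minimalPrimes) :
    (maximalIdeal (Localization.AtPrime p)).map
        (algebraMap (Localization.AtPrime p) (Localization.AtPrime P)) =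
      maximalIdeal (Localization.AtPrime P) := by
  rw [← Localization.AtPrime.map_eq_maximalIdeal, ← Localization.AtPrime.map_eq_maximalIdeal,
    ← IsLocalization.AtPrime.radical_map_of_mem_minimalPrimes (Localization.AtPrime P) P _ hP,
    ← IsLocalization.map_radical P.primeCompl, hrad.radical, Ideal.map_map, Ideal.map_map,
    ← IsScalarTower.algebraMap_eq, ← IsScalarTower.algebraMap_eq]

theorem isRegularLocal_localization_iff_of_flat [IsNoetherianRing A] [IsNoetherianRing B]
    [Module.Flat A B] (hrad : (p.map (algebraMap A B)).IsRadical)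
    (hP : P ∈ (p.map (algebraMap A B)).minimalPrimes) :
    IsRegularLocal (Localization.AtPrime p) ↔ IsRegularLocal (Localization.AtPrime P) := by
  have : P.LiesOver p := liesOver_of_mem_minimalPrimes_map hP
  let := Localization.AtPrime.algebraOfLiesOver p P
  rw [isRegularLocal_iff_isRegularLocalRing, isRegularLocal_iff_isRegularLocalRing]
  exact isRegularLocalRing_iff_of_map_maximalIdeal_eq (map_maximalIdeal_localization_eq hrad hP)

end MinimalPrimes

section Pushout

variable (k A R B : Type*) [CommRing k] [CommRing A] [CommRing R] [CommRing B] [Algebra k A]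
  [Algebra k R] [Algebra k B] [Algebra A B] [Algebra R B] [IsScalarTower k A B]
  [IsScalarTower k R B]

instance isScalarTower_quotient_map (I : Ideal A) :
    IsScalarTower k (A ⧸ I) (B ⧸ I.map (algebraMap A B)) :=
  .to₁₃₄ k A (A ⧸ I) (B ⧸ I.map (algebraMap A B))

theorem isPushout_quotient_map (I : Ideal A) :
    Algebra.IsPushout A (A ⧸ I) B (B ⧸ I.map (algebraMap A B)) := by
  refine .symm ⟨.of_equiv
    (Algebra.TensorProduct.quotIdealMapEquivTensorQuot B I).symm.toLinearEquiv fun x => ?_⟩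
  obtain ⟨a, rfl⟩ := Ideal.Quotient.mk_surjective x
  simp [← Algebra.algebraMap_eq_smul_one]

theorem isPushout_quotient [Algebra.IsPushout k A R B] (I : Ideal A) :
    Algebra.IsPushout k (A ⧸ I) R (B ⧸ I.map (algebraMap A B)) :=
  (Algebra.IsPushout.comp_iff k A R B).mpr (isPushout_quotient_map A B I)

end Pushout

theorem isRadical_map_of_isPushout (k R : Type*) {A B : Type*} [Field k] [PerfectField k]
    [CommRing A] [CommRing R] [IsReduced R] [CommRing B] [Algebra k A] [Algebra k R] [Algebra k B]
    [Algebra A B] [Algebra R B] [IsScalarTower k A B] [IsScalarTower k R B]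
    [Algebra.IsPushout k A R B] {I : Ideal A} (hI : I.IsRadical) :
    (I.map (algebraMap A B)).IsRadical := by
  rw [Ideal.isRadical_iff_quotient_reduced] at hI ⊢
  have := isPushout_quotient k A R B I
  have : IsReduced ((A ⧸ I) ⊗[k] R) := isReduced_tensorProduct
  let e := (Algebra.IsPushout.equiv k (A ⧸ I) R (B ⧸ I.map (algebraMap A B))).symm
  exact isReduced_of_injective e e.injective

theorem regular_iff_regular_base_change_general (k R : Type*) {A B : Type*} [Field k]
    [PerfectField k] [CommRing A] [IsNoetherianRing A] [CommRing R] [IsReduced R] [CommRing B]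
    [IsNoetherianRing B] [Algebra k A] [Algebra k R] [Algebra k B]
    [Algebra A B] [Algebra R B] [IsScalarTower k A B] [IsScalarTower k R B]
    [Algebra.IsPushout k A R B] (p : Ideal A) [p.IsPrime] (P : Ideal B) [P.IsPrime]
    (hP : P ∈ (p.map (algebraMap A B)).minimalPrimes) :
    IsRegularLocal (Localization.AtPrime p) ↔ IsRegularLocal (Localization.AtPrime P) := by
  have : Module.Flat A B :=
    .isBaseChange k A R B (Algebra.IsPushout.out (S := A) (R' := R))
  have hp : p.IsRadical := Ideal.IsPrime.isRadical ‹_›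
  exact isRegularLocal_localization_iff_of_flat (isRadical_map_of_isPushout k R hp) hP

/-- **Base change and regularity.**
Let `K ⊆ K'` be fields of characteristic `0`, `I ≤ K[x₁,…,xₙ]` an ideal,
`A = K[x₁,…,xₙ]/I`, `A' = K'[x₁,…,xₙ]/(I·K'[x₁,…,xₙ])` and `p ≤ A` a prime ideal.
Then `A_p` is a regular local ring if and only if `A'_P` is a regular local ring
for one (equivalently, every) prime `P` of `A'` minimal over the extension `p·A'`. -/
theorem regular_iff_regular_base_change
    (K K' : Type*) [Field K] [Field K'] [Algebra K K'] [CharZero K]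
    (n : ℕ) (I : Ideal (MvPolynomial (Fin n) K))
    (p : Ideal (MvPolynomial (Fin n) K ⧸ I)) [p.IsPrime]
    (P : Ideal (MvPolynomial (Fin n) K' ⧸
        Ideal.map (MvPolynomial.map (algebraMap K K')) I)) [P.IsPrime]
    (hP : P ∈ (Ideal.map
        (Ideal.quotientMap (Ideal.map (MvPolynomial.map (algebraMap K K')) I)
          (MvPolynomial.map (algebraMap K K')) Ideal.le_comap_map) p).minimalPrimes) :
    IsRegularLocal (Localization.AtPrime p) ↔ IsRegularLocal (Localization.AtPrime P) := by
  let := MvPolynomial.algebraMvPolynomial (σ := Fin n) (R := K) (S := K')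
  revert P
  rw [← MvPolynomial.algebraMap_def]
  intro P _ hP
  have := isPushout_quotient K (MvPolynomial (Fin n) K) K' (MvPolynomial (Fin n) K') I
  exact regular_iff_regular_base_change_general K K' p P hP
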